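/- Let n ≥ 1, s > 1, q ∈ [1,∞], and p, p̄ ∈ (1,∞) with p̄ < p ≤ 2p̄ and s > n(2/p − 1/p̄). Then there is a constant C > 0 such that for all Schwartz vector fields u, v : ℝⁿ → ℝⁿ, ‖div(u ⊗ v)‖_{B^{s−1}_{p̄,q}} ≤ C ‖u‖_{B^s_{p,q}} ‖v‖_{B^s_{p,q}}, where u ⊗ v is the matrix with entries (u ⊗ v)_{jk} = u_j v_k and div(u ⊗ v) is the vector with components ∑_k ∂_{x_k}(u_j v_k). -/

import Mathlib

open MeasureTheory Real Filter
open scoped ENNReal FourierTransform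

noncomputable section

/-- `ℝⁿ` as a Euclidean space. -/
abbrev Rn (n : ℕ) : Type := EuclideanSpace ℝ (Fin n)

variable {n : ℕ}

/-- The Fourier transform of a real-valued Schwartz function, viewed as a ℂ-valued function. -/
def ftC (f : SchwartzMap (Rn n) ℝ) : Rn n → ℂ :=
  𝓕 (fun x => (f x : ℂ))

/-- `ψ₀` is a Littlewood–Paley function: an even, radial Schwartz function whose Fourier
transform is nonnegative, supported in the annulus `{ξ : 1/2 < ‖ξ‖ < 2}`, and satisfies
`∑_{j ∈ ℤ} ψ̂₀(2^{-j} ξ) = 1` for `ξ ≠ 0`. -/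
structure IsLPF (n : ℕ) (ψ₀ : SchwartzMap (Rn n) ℝ) : Prop where
  even : ∀ x : Rn n, ψ₀ (-x) = ψ₀ x
  radial : ∀ x y : Rn n, ‖x‖ = ‖y‖ → ψ₀ x = ψ₀ y
  ft_im : ∀ ξ : Rn n, (ftC ψ₀ ξ).im = 0
  ft_nonneg : ∀ ξ : Rn n, 0 ≤ (ftC ψ₀ ξ).re
  ft_supp : ∀ ξ : Rn n, ftC ψ₀ ξ ≠ 0 → 1/2 < ‖ξ‖ ∧ ‖ξ‖ < 2
  ft_sum : ∀ ξ : Rn n, ξ ≠ 0 → HasSum (fun j : ℤ => ftC ψ₀ ((2:ℝ) ^ (-j) • ξ)) 1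

/-- The Littlewood–Paley kernel `ψ_j(x) = 2^{jn} ψ₀(2^j x)`, whose Fourier transform is
`ψ̂₀(2^{-j} ξ)`. -/
def lpKernel (ψ₀ : SchwartzMap (Rn n) ℝ) (j : ℤ) (x : Rn n) : ℝ :=
  (2:ℝ) ^ (j * (n:ℤ)) * ψ₀ ((2:ℝ) ^ j • x)

/-- The Littlewood–Paley projection `Δ_j f = ψ_j ∗ f`. -/
def lpProj (ψ₀ : SchwartzMap (Rn n) ℝ) (j : ℤ) (f : Rn n → ℝ) : Rn n → ℝ :=
  MeasureTheory.convolution (lpKernel ψ₀ j) f (ContinuousLinearMap.mul ℝ ℝ) volume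

/-- `S_j f = ∑_{m ≤ j} Δ_m f`, the low-frequency cutoff; this is the L² function whose
Fourier transform is `(∑_{m ≤ j} ψ̂₀(2^{-m} ξ)) f̂(ξ)`. -/
def lowProj (ψ₀ : SchwartzMap (Rn n) ℝ) (j : ℤ) (f : Rn n → ℝ) (x : Rn n) : ℝ :=
  ∑' m : ℤ, if m ≤ j then lpProj ψ₀ m f x else 0

/-- `Ψ` is the low-frequency piece of the Littlewood–Paley decomposition:
`Ψ̂ = 1 − ∑_{k ≥ 0} ψ̂_k`. -/
def IsLowPiece (ψ₀ Ψ : SchwartzMap (Rn n) ℝ) : Prop :=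
  ∀ ξ : Rn n, ftC Ψ ξ = 1 - ∑' k : ℕ, ftC ψ₀ ((2:ℝ) ^ (-(k:ℤ)) • ξ)

/-- The inhomogeneous Besov norm `‖f‖_{B^s_{p,q}}`, valued in `[0,∞]`:
`‖Ψ∗f‖_{L^p} + (∑_{j ≥ 0} (2^{js} ‖Δ_j f‖_{L^p})^q)^{1/q}`, with the supremum over `j`
replacing the `ℓ^q` sum when `q = ∞`. -/
def besovNorm (ψ₀ Ψ : SchwartzMap (Rn n) ℝ) (s : ℝ) (p q : ℝ≥0∞) (f : Rn n → ℝ) : ℝ≥0∞ :=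
  eLpNorm (MeasureTheory.convolution (fun x => Ψ x) f (ContinuousLinearMap.mul ℝ ℝ) volume)
      p volume +
    (if q = ∞ then
      ⨆ j : ℕ, ENNReal.ofReal ((2:ℝ) ^ ((j:ℝ) * s)) * eLpNorm (lpProj ψ₀ (j:ℤ) f) p volume
    else
      (∑' j : ℕ, (ENNReal.ofReal ((2:ℝ) ^ ((j:ℝ) * s)) *
        eLpNorm (lpProj ψ₀ (j:ℤ) f) p volume) ^ q.toReal) ^ (1 / q.toReal))

/-- The heat semigroup `e^{tΔ} f = h_t ∗ f` with `h_t(x) = (4πt)^{-n/2} e^{-‖x‖²/(4t)}`. -/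
def heatOp (n : ℕ) (t : ℝ) (f : Rn n → ℝ) : Rn n → ℝ :=
  MeasureTheory.convolution
    (fun x : Rn n => (4 * π * t) ^ (-(n:ℝ)/2) * Real.exp (-‖x‖^2 / (4*t))) f
    (ContinuousLinearMap.mul ℝ ℝ) volume

/-- The partial derivative `∂_{x_i} f`. -/
def pderiv' (i : Fin n) (f : Rn n → ℝ) (x : Rn n) : ℝ :=
  fderiv ℝ f x (EuclideanSpace.single i 1)

/-- The Laplacian `Δf = ∑ᵢ ∂²_{x_i} f`. -/
def lapl (f : Rn n → ℝ) (x : Rn n) : ℝ :=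
  ∑ i : Fin n, pderiv' i (pderiv' i f) x

/-! The proof is a paraproduct argument. Write `S_m` for the cutoff to frequencies below `2^m` and
`Δ_m` for the block at `2^m`. Telescoping `S_{m+1} f · S_{m+1} g - S_m f · S_m g` gives, for every
`j`, `f g = S_j f · S_j g + ∑_{m ≥ j} (Δ_m f · S_{m+1} g + Δ_m g · S_m f)`.

The first term has frequencies below `2^{j+1}`, so `Δ_{j+2}` annihilates it. On the other terms the
derivative is moved onto the kernel of `Δ_{j+2}`, which costs `2^{j+2}` and turns the weight of
`B^s` into that of `B^{s-1}`. With `1/r = 1/p̄ - 1/p`, Hölder's inequality places `Δ_m f` in `L^p`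
and `S_m g` in `L^r`. The latter norm is bounded uniformly in `m` by Bernstein's inequality, which
loses `2^{m n (1/p - 1/r)} = 2^{m n (2/p - 1/p̄)}`; this loss is summable against `2^{-ms}` because
`s > n (2/p - 1/p̄)`. Finally the sum over `m ≥ j` is a discrete convolution in `ℓ^q` with the
weights `2^{-(m-j)s}`, which are summable because `s > 0`. -/

/-! ### Young's inequality -/

theorem lintegral_lconvolution {G : Type*} [AddGroup G] [MeasurableSpace G] [MeasurableAdd₂ G]
    [MeasurableNeg G] {μ : Measure G} [μ.IsAddLeftInvariant] [SFinite μ] {f g : G → ℝ≥0∞}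
    (hf : AEMeasurable f μ) (hg : AEMeasurable g μ) :
    ∫⁻ x, (f ⋆ₗ[μ] g) x ∂μ = (∫⁻ x, f x ∂μ) * ∫⁻ x, g x ∂μ := by
  calc ∫⁻ x, (f ⋆ₗ[μ] g) x ∂μ
      = ∫⁻ y, ∫⁻ x, f y * g (-y + x) ∂μ ∂μ := lintegral_lintegral_swap (by fun_prop)
    _ = ∫⁻ y, f y * ∫⁻ x, g x ∂μ ∂μ := by
        refine lintegral_congr fun y => ?_
        rw [lintegral_add_left_eq_self (fun x => f y * g x) (-y), lintegral_const_mul'' _ hg]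
    _ = (∫⁻ x, f x ∂μ) * ∫⁻ x, g x ∂μ := lintegral_mul_const'' _ hf

section Young

variable {G : Type*} [AddCommGroup G] [MeasurableSpace G] [MeasurableAdd₂ G] [MeasurableNeg G]
  {μ : Measure G} [μ.IsAddLeftInvariant] [μ.IsNegInvariant]

theorem lintegral_neg_add_eq_self (h : G → ℝ≥0∞) (x : G) :
    ∫⁻ y, h (-y + x) ∂μ = ∫⁻ y, h y ∂μ := by
  simpa only [neg_add_eq_sub] using lintegral_sub_left_eq_self h x

variable {𝕜 : Type*} [RCLike 𝕜] {F H : G → 𝕜}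

theorem eLpNorm_top_convolution_le (hF : AEStronglyMeasurable F μ)
    (hH : AEStronglyMeasurable H μ) (p q : ℝ≥0∞) [p.HolderConjugate q] :
    eLpNorm (convolution F H (ContinuousLinearMap.mul 𝕜 𝕜) μ) ∞ μ ≤
      eLpNorm F p μ * eLpNorm H q μ := by
  refine eLpNormEssSup_le_of_ae_enorm_bound (.of_forall fun x => ?_)
  have hsub := Measure.measurePreserving_sub_left μ x
  calc ‖convolution F H (ContinuousLinearMap.mul 𝕜 𝕜) μ x‖ₑ
      ≤ ∫⁻ y, ‖F y * H (x - y)‖ₑ ∂μ := enorm_integral_le_lintegral_enorm _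
    _ = eLpNorm (F • (H ∘ fun y => x - y)) 1 μ := by rw [eLpNorm_one_eq_lintegral_enorm]; rfl
    _ ≤ eLpNorm F p μ * eLpNorm (H ∘ fun y => x - y) q μ :=
        eLpNorm_smul_le_mul_eLpNorm (hH.comp_measurePreserving hsub) hF
    _ = eLpNorm F p μ * eLpNorm H q μ := by rw [eLpNorm_comp_measurePreserving hH hsub]

variable [SFinite μ] {f g : G → ℝ≥0∞}

theorem lconvolution_le_of_inv_add_inv_eq (hf : AEMeasurable f μ)
    (hg : AEMeasurable g μ) {p q r : ℝ} (hp : 1 ≤ p) (hq : 1 ≤ q) (hr : 0 < r)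
    (h : p⁻¹ + q⁻¹ = 1 + r⁻¹) (x : G) :
    (f ⋆ₗ[μ] g) x ≤ (∫⁻ y, f y ^ p * g (-y + x) ^ q ∂μ) ^ r⁻¹ *
      ((∫⁻ y, f y ^ p ∂μ) ^ (p⁻¹ - r⁻¹) * (∫⁻ y, g y ^ q ∂μ) ^ (q⁻¹ - r⁻¹)) := by
  have hp0 : 0 < p := by positivity
  have hq0 : 0 < q := by positivity
  have hwp : 0 ≤ p⁻¹ - r⁻¹ := by linarith [inv_le_one_of_one_le₀ hq]
  have hwq : 0 ≤ q⁻¹ - r⁻¹ := by linarith [inv_le_one_of_one_le₀ hp]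
  have rpow_split : ∀ (a : ℝ≥0∞) {t : ℝ}, 0 < t → 0 ≤ t⁻¹ - r⁻¹ →
      a = (a ^ t) ^ r⁻¹ * (a ^ t) ^ (t⁻¹ - r⁻¹) := fun a t ht hw => by
    rw [← ENNReal.rpow_add_of_nonneg _ _ (by positivity) hw, add_sub_cancel,
      ENNReal.rpow_rpow_inv ht.ne']
  calc (f ⋆ₗ[μ] g) x
      = ∫⁻ y, ∏ i : Fin 3, (![fun y => f y ^ p * g (-y + x) ^ q, fun y => f y ^ p,
          fun y => g (-y + x) ^ q] i y) ^ (![r⁻¹, p⁻¹ - r⁻¹, q⁻¹ - r⁻¹] i) ∂μ := by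
        refine lintegral_congr fun y => ?_
        rw [rpow_split (f y) hp0 hwp, rpow_split (g (-y + x)) hq0 hwq, mul_mul_mul_comm]
        simp [Fin.prod_univ_three, ENNReal.mul_rpow_of_nonneg _ _ (inv_nonneg.2 hr.le), mul_assoc]
    _ ≤ _ := ENNReal.lintegral_prod_norm_pow_le _
        (by simpa [Fin.forall_fin_succ] using ⟨by fun_prop, by fun_prop, by fun_prop⟩)
        (by simp [Fin.sum_univ_three]; linarith)
        (by simpa [Fin.forall_fin_succ] using ⟨hr.le, by linarith, by linarith⟩)
    _ = _ := by
        simp [Fin.prod_univ_three, lintegral_neg_add_eq_self (fun y => g y ^ q), mul_assoc]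

theorem lintegral_lconvolution_rpow_le (hf : AEMeasurable f μ)
    (hg : AEMeasurable g μ) {p q r : ℝ} (hp : 1 ≤ p) (hq : 1 ≤ q) (hr : 0 < r)
    (h : p⁻¹ + q⁻¹ = 1 + r⁻¹) :
    (∫⁻ x, (f ⋆ₗ[μ] g) x ^ r ∂μ) ^ r⁻¹ ≤
      (∫⁻ x, f x ^ p ∂μ) ^ p⁻¹ * (∫⁻ x, g x ^ q ∂μ) ^ q⁻¹ := by
  set A := ∫⁻ y, f y ^ p ∂μ
  set B := ∫⁻ y, g y ^ q ∂μ
  have hwp : 0 ≤ p⁻¹ - r⁻¹ := by linarith [inv_le_one_of_one_le₀ hq]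
  have hwq : 0 ≤ q⁻¹ - r⁻¹ := by linarith [inv_le_one_of_one_le₀ hp]
  set D := A ^ (p⁻¹ - r⁻¹) * B ^ (q⁻¹ - r⁻¹)
  have hfp : AEMeasurable (fun x => f x ^ p) μ := by fun_prop
  have hgq : AEMeasurable (fun x => g x ^ q) μ := by fun_prop
  calc (∫⁻ x, (f ⋆ₗ[μ] g) x ^ r ∂μ) ^ r⁻¹
      ≤ (∫⁻ x, ((fun x => f x ^ p) ⋆ₗ[μ] fun x => g x ^ q) x * D ^ r ∂μ) ^ r⁻¹ := by
        gcongr with x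
        calc (f ⋆ₗ[μ] g) x ^ r
            ≤ ((((fun x => f x ^ p) ⋆ₗ[μ] fun x => g x ^ q) x) ^ r⁻¹ * D) ^ r := by
              gcongr
              exact lconvolution_le_of_inv_add_inv_eq hf hg hp hq hr h x
          _ = _ := by rw [ENNReal.mul_rpow_of_nonneg _ _ hr.le, ENNReal.rpow_inv_rpow hr.ne']
    _ = (A * B) ^ r⁻¹ * D := by
        rw [lintegral_mul_const'' _ (by fun_prop), lintegral_lconvolution hfp hgq,
          ENNReal.mul_rpow_of_nonneg _ _ (by positivity), ENNReal.rpow_rpow_inv hr.ne']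
    _ = (A ^ r⁻¹ * A ^ (p⁻¹ - r⁻¹)) * (B ^ r⁻¹ * B ^ (q⁻¹ - r⁻¹)) := by
        rw [ENNReal.mul_rpow_of_nonneg _ _ (by positivity), mul_mul_mul_comm]
    _ = A ^ p⁻¹ * B ^ q⁻¹ := by
        rw [← ENNReal.rpow_add_of_nonneg _ _ (by positivity) hwp,
          ← ENNReal.rpow_add_of_nonneg _ _ (by positivity) hwq, add_sub_cancel, add_sub_cancel]

theorem eLpNorm_convolution_le (hF : AEStronglyMeasurable F μ) (hH : AEStronglyMeasurable H μ)
    {p q r : ℝ≥0∞} (hp : 1 ≤ p) (hq : 1 ≤ q) (h : p⁻¹ + q⁻¹ = 1 + r⁻¹) :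
    eLpNorm (convolution F H (ContinuousLinearMap.mul 𝕜 𝕜) μ) r μ ≤
      eLpNorm F p μ * eLpNorm H q μ := by
  have hp0 : p ≠ 0 := (one_pos.trans_le hp).ne'
  have hq0 : q ≠ 0 := (one_pos.trans_le hq).ne'
  have hr0 : r ≠ 0 := by
    rintro rfl
    simp [ENNReal.add_eq_top, hp0, hq0] at h
  rcases eq_or_ne r ∞ with rfl | hr
  · have : p.HolderConjugate q := ⟨by simpa using h⟩
    exact eLpNorm_top_convolution_le hF hH p q
  have ne_top : ∀ {a b : ℝ≥0∞}, 1 ≤ b → a⁻¹ + b⁻¹ = 1 + r⁻¹ → a ≠ ∞ := by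
    rintro a b hb hab rfl
    have : (1 : ℝ≥0∞) < 1 + r⁻¹ := ENNReal.lt_add_right (by simp) (by simpa)
    exact this.not_ge (by simpa [← hab])
  have hp_top := ne_top hq h
  have hq_top := ne_top hp (add_comm q⁻¹ p⁻¹ ▸ h)
  have h_real : p.toReal⁻¹ + q.toReal⁻¹ = 1 + r.toReal⁻¹ := by
    have := congrArg ENNReal.toReal h
    rwa [ENNReal.toReal_add (by simpa) (by simpa), ENNReal.toReal_add (by simp) (by simpa),
      ENNReal.toReal_inv, ENNReal.toReal_inv, ENNReal.toReal_inv, ENNReal.toReal_one] at this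
  have one_le_toReal : ∀ {a : ℝ≥0∞}, 1 ≤ a → a ≠ ∞ → 1 ≤ a.toReal := fun ha ha' => by
    simpa using ENNReal.toReal_mono ha' ha
  calc eLpNorm (convolution F H (ContinuousLinearMap.mul 𝕜 𝕜) μ) r μ
      ≤ eLpNorm ((fun y => ‖F y‖ₑ) ⋆ₗ[μ] fun y => ‖H y‖ₑ) r μ :=
        eLpNorm_mono_enorm fun x =>
          (enorm_integral_le_lintegral_enorm _).trans_eq (by
            simp only [ContinuousLinearMap.mul_apply', enorm_mul, lconvolution_def,
              neg_add_eq_sub, enorm_eq_self])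
    _ ≤ eLpNorm F p μ * eLpNorm H q μ := by
        simpa [eLpNorm_eq_lintegral_rpow_enorm_toReal, *] using
          lintegral_lconvolution_rpow_le hF.enorm hH.enorm
            (one_le_toReal hp hp_top) (one_le_toReal hq hq_top)
            (ENNReal.toReal_pos hr0 hr) h_real

end Young

/-! ### Minkowski's inequality and sequence norms -/

theorem eLpNorm_tsum_le {α : Type*} [MeasurableSpace α] {μ : Measure α} {f : ℕ → α → ℝ≥0∞}
    (hf : ∀ i, AEMeasurable (f i) μ) {p : ℝ≥0∞} (hp : 1 ≤ p) :
    eLpNorm (fun x => ∑' i, f i x) p μ ≤ ∑' i, eLpNorm (f i) p μ := by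
  rcases eq_or_ne p ∞ with rfl | hp_top
  · refine eLpNormEssSup_le_of_ae_enorm_bound ?_
    filter_upwards [ae_all_iff.2 fun i => ae_le_eLpNormEssSup (f := f i) (μ := μ)] with x hx
    exact ENNReal.tsum_le_tsum hx
  have hp0 : 0 < p.toReal := ENNReal.toReal_pos (one_pos.trans_le hp).ne' hp_top
  have h_partial : ∀ N, ∫⁻ x, (∑ i ∈ Finset.range N, f i x) ^ p.toReal ∂μ ≤
      (∑' i, eLpNorm (f i) p μ) ^ p.toReal := fun N => by
    have h := (eLpNorm_sum_le (s := Finset.range N)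
      (fun i _ => (hf i).aestronglyMeasurable) hp).trans (ENNReal.sum_le_tsum _)
    simpa [eLpNorm_eq_lintegral_rpow_enorm_toReal (one_pos.trans_le hp).ne' hp_top,
      ENNReal.rpow_inv_le_iff hp0] using h
  rw [eLpNorm_eq_lintegral_rpow_enorm_toReal (one_pos.trans_le hp).ne' hp_top, one_div,
    ENNReal.rpow_inv_le_iff hp0]
  calc ∫⁻ x, ‖∑' i, f i x‖ₑ ^ p.toReal ∂μ
      = ∫⁻ x, ⨆ N, (∑ i ∈ Finset.range N, f i x) ^ p.toReal ∂μ := by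
        refine lintegral_congr fun x => ?_
        rw [enorm_eq_self, ENNReal.tsum_eq_iSup_nat]
        exact (ENNReal.orderIsoRpow p.toReal hp0).map_iSup _
    _ = ⨆ N, ∫⁻ x, (∑ i ∈ Finset.range N, f i x) ^ p.toReal ∂μ :=
        lintegral_iSup' (fun N => by fun_prop) (.of_forall fun x => fun M N hMN => by
          dsimp only; gcongr)
    _ ≤ _ := iSup_le h_partial

/-- The `ℓ^q` norm of a sequence in `[0, ∞]`, encoded as an `L^q` norm for the counting measure. -/
abbrev lqNorm (q : ℝ≥0∞) (a : ℕ → ℝ≥0∞) : ℝ≥0∞ := eLpNorm a q Measure.count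

section lqNorm

variable {q : ℝ≥0∞}

theorem lqNorm_top (a : ℕ → ℝ≥0∞) : lqNorm ∞ a = ⨆ j, a j := by simp [lqNorm]

theorem lqNorm_eq_tsum (hq : q ≠ 0) (hq' : q ≠ ∞) (a : ℕ → ℝ≥0∞) :
    lqNorm q a = (∑' j, a j ^ q.toReal) ^ (1 / q.toReal) := by
  simp [lqNorm, eLpNorm_eq_lintegral_rpow_enorm_toReal hq hq', lintegral_count]

theorem lqNorm_comp_le_of_injective (hq : q ≠ 0) (a : ℕ → ℝ≥0∞) {e : ℕ → ℕ}
    (he : e.Injective) : lqNorm q (fun j => a (e j)) ≤ lqNorm q a := by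
  rcases eq_or_ne q ∞ with rfl | hq'
  · simpa only [lqNorm_top] using iSup_comp_le a e
  · simp only [lqNorm_eq_tsum hq hq']
    exact ENNReal.rpow_le_rpow
      (ENNReal.tsum_comp_le_tsum_of_injective he fun j => a j ^ q.toReal) (by positivity)

theorem lqNorm_const_mul (hq : q ≠ 0) (c : ℝ≥0∞) (a : ℕ → ℝ≥0∞) :
    lqNorm q (fun j => c * a j) = c * lqNorm q a := by
  rcases eq_or_ne q ∞ with rfl | hq'
  · simp only [lqNorm_top, ENNReal.mul_iSup]
  · have := ENNReal.toReal_pos hq hq'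
    simp only [lqNorm_eq_tsum hq hq', one_div, ENNReal.mul_rpow_of_nonneg _ _ this.le,
      ENNReal.tsum_mul_left, ENNReal.mul_rpow_of_nonneg _ _ (inv_pos.2 this).le,
      ENNReal.rpow_rpow_inv this.ne']

theorem lqNorm_le_add_lqNorm_succ (hq : 1 ≤ q) (a : ℕ → ℝ≥0∞) :
    lqNorm q a ≤ a 0 + lqNorm q (fun j => a (j + 1)) := by
  have hq0 := (one_pos.trans_le hq).ne'
  rcases eq_or_ne q ∞ with rfl | hq'
  · simp only [lqNorm_top]
    rw [← sup_iSup_nat_succ]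
    exact sup_le le_self_add le_add_self
  · have := ENNReal.toReal_pos hq0 hq'
    have h1 : 1 ≤ q.toReal := by simpa using ENNReal.toReal_mono hq' hq
    simp only [lqNorm_eq_tsum hq0 hq']
    rw [tsum_eq_zero_add' ENNReal.summable]
    refine (ENNReal.rpow_add_le_add_rpow _ _ (by positivity)
      (by simpa using inv_le_one_of_one_le₀ h1)).trans_eq ?_
    rw [one_div, ENNReal.rpow_rpow_inv this.ne']

theorem lqNorm_tsum_mul_shift_le (hq : 1 ≤ q) (w a : ℕ → ℝ≥0∞) :
    lqNorm q (fun j => ∑' i, w i * a (j + i)) ≤ (∑' i, w i) * lqNorm q a := by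
  have hq0 := (one_pos.trans_le hq).ne'
  calc lqNorm q (fun j => ∑' i, w i * a (j + i))
      ≤ ∑' i, lqNorm q (fun j => w i * a (j + i)) :=
        eLpNorm_tsum_le (fun _ => measurable_from_nat.aemeasurable) hq
    _ ≤ ∑' i, w i * lqNorm q a := by
        gcongr with i
        rw [lqNorm_const_mul hq0]
        gcongr
        exact lqNorm_comp_le_of_injective hq0 a (add_left_injective i)
    _ = (∑' i, w i) * lqNorm q a := ENNReal.tsum_mul_right

end lqNorm

/-! ### Dilations and convolutions of Schwartz functions -/

open SchwartzMap LineDeriv Module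

local notation:75 f:75 "⋆" g:76 => SchwartzMap.convolution (ContinuousLinearMap.mul ℂ ℂ) f g
local notation:75 f:75 "⊙" g:76 => SchwartzMap.pairing (ContinuousLinearMap.mul ℂ ℂ) f g

section SchwartzFourier

variable {V : Type*} [NormedAddCommGroup V] [InnerProductSpace ℝ V]

/-- The dilation `φ ↦ |c|^d φ(c ·)`, `d = dim V`. This normalization preserves the integral, and
turns into `𝓕 φ (c⁻¹ ·)` on the Fourier side. -/
def dilate (c : ℝˣ) (φ : 𝓢(V, ℂ)) : 𝓢(V, ℂ) :=
  (|(c : ℝ)| ^ finrank ℝ V) • compCLMOfContinuousLinearEquiv ℝ (ContinuousLinearEquiv.smulLeft c) φ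

theorem dilate_apply (c : ℝˣ) (φ : 𝓢(V, ℂ)) (x : V) :
    dilate c φ x = |(c : ℝ)| ^ finrank ℝ V • φ ((c : ℝ) • x) := by
  simp [dilate, Units.smul_def]

theorem lineDeriv_dilate (c : ℝˣ) (φ : 𝓢(V, ℂ)) (m : V) :
    ∂_{m} (dilate c φ) = (c : ℝ) • dilate c (∂_{m} φ) := by
  ext x
  simp only [dilate, lineDerivOp_smul, lineDerivOp_compCLMOfContinuousLinearEquiv]
  rw [smul_comm]
  simp [Units.smul_def, lineDerivOp_left_smul]

/-- The dyadic dilation `φ_j = 2^{jd} φ(2^j ·)`, with `𝓕 φ_j = 𝓕 φ (2^{-j} ·)`. Only the frequencies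
`j ≥ 0` enter the inhomogeneous norms. -/
def dyadic (φ : 𝓢(V, ℂ)) (j : ℕ) : 𝓢(V, ℂ) := dilate (Units.mk0 2 two_ne_zero ^ j) φ

theorem dyadic_zero (φ : 𝓢(V, ℂ)) : dyadic φ 0 = φ := by
  ext x
  simp [dyadic, dilate_apply]

theorem lineDeriv_dyadic (φ : 𝓢(V, ℂ)) (j : ℕ) (m : V) :
    ∂_{m} (dyadic φ j) = (2 : ℝ) ^ j • dyadic (∂_{m} φ) j := by
  simp [dyadic, lineDeriv_dilate]

theorem norm_mul_apply_le (f g : 𝓢(V, ℂ)) (x y : V) :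
    ‖f x * g y‖ ≤ ‖f x‖ * SchwartzMap.seminorm ℝ 0 0 g := by
  rw [norm_mul]
  gcongr
  exact g.norm_le_seminorm ℝ _

variable [FiniteDimensional ℝ V] [MeasurableSpace V] [BorelSpace V]

theorem schwartz_ext_fourier {f g : 𝓢(V, ℂ)} (h : ∀ ξ, 𝓕 f ξ = 𝓕 g ξ) : f = g :=
  (FourierTransform.fourierCLE ℂ 𝓢(V, ℂ)).injective (SchwartzMap.ext h)

theorem fourier_conv_apply (f g : 𝓢(V, ℂ)) (ξ : V) : 𝓕 (f ⋆ g) ξ = 𝓕 f ξ * 𝓕 g ξ := by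
  simp [fourier_convolution]

theorem fourierInv_apply_eq_fourier_neg (f : 𝓢(V, ℂ)) (x : V) : 𝓕⁻ f x = 𝓕 f (-x) := by
  simp [fourierInv_apply_eq]

theorem fourier_mul (f g : 𝓢(V, ℂ)) : 𝓕 (f ⊙ g) = 𝓕 f ⋆ 𝓕 g := by
  apply (FourierTransform.fourierCLE ℂ 𝓢(V, ℂ)).symm.injective
  ext x
  calc 𝓕⁻ (𝓕 (f ⊙ g)) x = 𝓕⁻ (𝓕 f) x * 𝓕⁻ (𝓕 g) x := by simp
    _ = 𝓕⁻ (𝓕 f ⋆ 𝓕 g) x := by simp only [fourierInv_apply_eq_fourier_neg, fourier_conv_apply]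

theorem fourier_mul_eq_zero {f g : 𝓢(V, ℂ)} {R : ℝ}
    (hf : ∀ ξ, R ≤ ‖ξ‖ → 𝓕 f ξ = 0) (hg : ∀ ξ, R ≤ ‖ξ‖ → 𝓕 g ξ = 0) {ξ : V}
    (hξ : 2 * R ≤ ‖ξ‖) : 𝓕 (f ⊙ g) ξ = 0 := by
  rw [fourier_mul, convolution_apply]
  refine integral_eq_zero_of_ae (.of_forall fun η => ?_)
  rcases le_or_gt R ‖η‖ with hη | hη
  · simp [hf η hη]
  · have : R ≤ ‖ξ - η‖ := by linarith [norm_sub_norm_le ξ η]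
    simp [hg _ this]

theorem fourier_lineDeriv_apply (f : 𝓢(V, ℂ)) (m ξ : V) :
    𝓕 (∂_{m} f) ξ = 2 * π * Complex.I * inner ℝ ξ m * 𝓕 f ξ := by
  have h_growth : (fun x : V => inner ℝ x m).HasTemperateGrowth := by fun_prop
  simp [fourier_lineDerivOp_eq, smulLeftCLM_apply_apply h_growth, mul_assoc]

theorem lineDeriv_conv_comm (f g : 𝓢(V, ℂ)) (m : V) : (∂_{m} f) ⋆ g = f ⋆ ∂_{m} g := by
  refine schwartz_ext_fourier fun ξ => ?_
  simp only [fourier_conv_apply, fourier_lineDeriv_apply]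
  ring

theorem fourier_dilate_apply (c : ℝˣ) (φ : 𝓢(V, ℂ)) (ξ : V) :
    𝓕 (dilate c φ) ξ = 𝓕 φ ((c : ℝ)⁻¹ • ξ) := by
  have hc : |(c : ℝ)| ≠ 0 := by simp
  have h_inner : ∀ x : V, inner ℝ ((c : ℝ) • x) ((c : ℝ)⁻¹ • ξ) = inner ℝ x ξ := fun x => by
    rw [real_inner_smul_left, real_inner_smul_right, mul_inv_cancel_left₀ c.ne_zero]
  calc 𝓕 (dilate c φ) ξ
      = ∫ x, |(c : ℝ)| ^ finrank ℝ V •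
          (𝐞 (-(inner ℝ ((c : ℝ) • x) ((c : ℝ)⁻¹ • ξ))) • φ ((c : ℝ) • x)) := by
        simp only [fourier_coe, Real.fourier_eq, dilate_apply, h_inner, smul_comm (𝐞 _)]
    _ = 𝓕 φ ((c : ℝ)⁻¹ • ξ) := by
        rw [integral_smul, Measure.integral_comp_smul volume
          (fun v => 𝐞 (-(inner ℝ v ((c : ℝ)⁻¹ • ξ))) • φ v), smul_smul, abs_inv, abs_pow,
          mul_inv_cancel₀ (pow_ne_zero _ hc), one_smul, fourier_coe, Real.fourier_eq]

theorem eLpNorm_dilate (c : ℝˣ) (φ : 𝓢(V, ℂ)) (a : ℝ≥0∞) :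
    eLpNorm (dilate c φ) a =
      ENNReal.ofReal (|(c : ℝ)| ^ (finrank ℝ V * (1 - a⁻¹.toReal))) * eLpNorm φ a := by
  have hc : 0 < |(c : ℝ)| := by simp
  have hemb : MeasurableEmbedding (fun x : V => (c : ℝ) • x) :=
    (Homeomorph.smulOfNeZero (c : ℝ) c.ne_zero).measurableEmbedding
  have : (dilate c φ : V → ℂ) = |(c : ℝ)| ^ finrank ℝ V • (φ ∘ fun x => (c : ℝ) • x) :=
    funext (dilate_apply c φ)
  rw [this, eLpNorm_const_smul, ← hemb.eLpNorm_map_measure, Measure.map_addHaar_smul _ c.ne_zero,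
    eLpNorm_smul_measure_of_ne_zero (by simp), smul_eq_mul, ← mul_assoc]
  congr 1
  rw [Real.enorm_of_nonneg (by positivity), ENNReal.ofReal_rpow_of_pos (by simp),
    ← ENNReal.ofReal_mul (by positivity), abs_inv, abs_pow, one_div, mul_one_sub, sub_eq_add_neg,
    Real.rpow_add hc, Real.rpow_natCast, Real.rpow_neg hc.le, Real.rpow_mul hc.le,
    Real.rpow_natCast, Real.inv_rpow (by positivity)]

theorem fourier_dyadic_apply (φ : 𝓢(V, ℂ)) (j : ℕ) (ξ : V) :
    𝓕 (dyadic φ j) ξ = 𝓕 φ (((2 : ℝ) ^ j)⁻¹ • ξ) := by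
  simp [dyadic, fourier_dilate_apply]

theorem eLpNorm_dyadic (φ : 𝓢(V, ℂ)) (j : ℕ) (a : ℝ≥0∞) :
    eLpNorm (dyadic φ j) a =
      (2 : ℝ≥0∞) ^ (j * (finrank ℝ V * (1 - a⁻¹.toReal))) * eLpNorm φ a := by
  rw [dyadic, eLpNorm_dilate, Units.val_pow_eq_pow_val, Units.val_mk0,
    abs_of_pos (by positivity), ← Real.rpow_natCast, ← Real.rpow_mul zero_le_two,
    ← ENNReal.ofReal_rpow_of_pos zero_lt_two, ENNReal.ofReal_ofNat]

theorem eLpNorm_one_dyadic (φ : 𝓢(V, ℂ)) (j : ℕ) : eLpNorm (dyadic φ j) 1 = eLpNorm φ 1 := by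
  simp [eLpNorm_dyadic]

theorem conv_apply (f g : 𝓢(V, ℂ)) (x : V) : (f ⋆ g) x = ∫ y, f y * g (x - y) :=
  convolution_apply _ f g x

theorem eLpNorm_conv_le {a p r : ℝ≥0∞} (ha : 1 ≤ a) (hp : 1 ≤ p) (h : a⁻¹ + p⁻¹ = 1 + r⁻¹)
    (f g : 𝓢(V, ℂ)) : eLpNorm (f ⋆ g) r ≤ eLpNorm f a * eLpNorm g p := by
  have : (f ⋆ g : V → ℂ) = MeasureTheory.convolution f g (ContinuousLinearMap.mul ℂ ℂ) volume :=
    funext (conv_apply f g)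
  rw [this]
  exact eLpNorm_convolution_le f.continuous.aestronglyMeasurable
    g.continuous.aestronglyMeasurable ha hp h

theorem eLpNorm_conv_le_one_mul {p : ℝ≥0∞} (hp : 1 ≤ p) (f g : 𝓢(V, ℂ)) :
    eLpNorm (f ⋆ g) p ≤ eLpNorm f 1 * eLpNorm g p :=
  eLpNorm_conv_le le_rfl hp (by simp) f g

theorem exists_inv_add_inv_eq_one_add_inv {p r : ℝ≥0∞} (hp : 1 ≤ p) (hpr : p ≤ r) :
    ∃ a, 1 ≤ a ∧ a⁻¹ + p⁻¹ = 1 + r⁻¹ ∧ 1 - a⁻¹.toReal = p⁻¹.toReal - r⁻¹.toReal := by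
  have hp1 : p⁻¹ ≤ 1 := ENNReal.inv_le_one.2 hp
  have hr : r⁻¹ ≤ p⁻¹ := ENNReal.inv_le_inv.2 hpr
  have ha1 : 1 - p⁻¹ + r⁻¹ ≤ 1 := (add_le_add_right hr _).trans_eq (tsub_add_cancel_of_le hp1)
  have h_exp : 1 - p⁻¹ + r⁻¹ + p⁻¹ = 1 + r⁻¹ := by
    rw [add_right_comm, tsub_add_cancel_of_le hp1]
  refine ⟨(1 - p⁻¹ + r⁻¹)⁻¹, ENNReal.one_le_inv.2 ha1, by rwa [inv_inv], ?_⟩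
  have h_real := congrArg ENNReal.toReal h_exp
  have ne_top : ∀ {b : ℝ≥0∞}, b ≤ 1 → b ≠ ∞ := ne_top_of_le_ne_top ENNReal.one_ne_top
  rw [ENNReal.toReal_add (ne_top ha1) (ne_top hp1),
    ENNReal.toReal_add ENNReal.one_ne_top (ne_top (hr.trans hp1)), ENNReal.toReal_one] at h_real
  rw [inv_inv]
  linarith

theorem exists_eLpNorm_dyadic_conv_le (Φ : 𝓢(V, ℂ)) {p r : ℝ≥0∞} (hp : 1 ≤ p) (hpr : p ≤ r) :
    ∃ C : ℝ≥0∞, C ≠ ∞ ∧ ∀ (m : ℕ) (h : 𝓢(V, ℂ)), eLpNorm (dyadic Φ m ⋆ h) r ≤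
      C * (2 : ℝ≥0∞) ^ (m * (finrank ℝ V * (p⁻¹.toReal - r⁻¹.toReal))) * eLpNorm h p := by
  obtain ⟨a, ha, h_exp, h_real⟩ := exists_inv_add_inv_eq_one_add_inv hp hpr
  refine ⟨eLpNorm Φ a volume, (Φ.eLpNorm_lt_top a volume).ne, fun m h => ?_⟩
  rw [← h_real, mul_comm (eLpNorm Φ a volume), ← eLpNorm_dyadic]
  exact eLpNorm_conv_le ha hp h_exp (dyadic Φ m) h

theorem dilate_conv_apply (c : ℝˣ) (φ f : 𝓢(V, ℂ)) (x : V) :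
    (dilate c φ ⋆ f) x = ∫ y, φ y * f (x - (c : ℝ)⁻¹ • y) := by
  have hc : |(c : ℝ)| ^ finrank ℝ V ≠ 0 := pow_ne_zero _ (by simp)
  have h_scale : ∀ y, dilate c φ y * f (x - y) = |(c : ℝ)| ^ finrank ℝ V •
      (φ ((c : ℝ) • y) * f (x - (c : ℝ)⁻¹ • ((c : ℝ) • y))) := fun y => by
    rw [dilate_apply, inv_smul_smul₀ c.ne_zero, smul_mul_assoc]
  simp only [conv_apply, h_scale]
  rw [integral_smul, Measure.integral_comp_smul volume
    (fun z => φ z * f (x - (c : ℝ)⁻¹ • z)), smul_smul, abs_inv, abs_pow, mul_inv_cancel₀ hc,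
    one_smul]

theorem norm_dilate_conv_apply_le (c : ℝˣ) (φ f : 𝓢(V, ℂ)) (x : V) :
    ‖(dilate c φ ⋆ f) x‖ ≤ (∫ y, ‖φ y‖) * SchwartzMap.seminorm ℝ 0 0 f := by
  rw [dilate_conv_apply, ← integral_mul_const]
  exact norm_integral_le_of_norm_le (φ.integrable.norm.mul_const _)
    (.of_forall fun y => norm_mul_apply_le φ f y _)

theorem tendsto_dyadic_conv_apply {φ : 𝓢(V, ℂ)} (hφ : ∫ y, φ y = 1) (f : 𝓢(V, ℂ)) (x : V) :
    Tendsto (fun N => (dyadic φ N ⋆ f) x) atTop (nhds (f x)) := by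
  have h_shift (y : V) :
      Tendsto (fun N : ℕ => x - ((2 : ℝ) ^ N)⁻¹ • y) atTop (nhds x) := by
    have h0 : Tendsto (fun N : ℕ => ((2 : ℝ) ^ N)⁻¹) atTop (nhds 0) :=
      tendsto_inv_atTop_zero.comp (tendsto_pow_atTop_atTop_of_one_lt one_lt_two)
    simpa using tendsto_const_nhds.sub (h0.smul_const y)
  have h_lim : Tendsto (fun N : ℕ => ∫ y, φ y * f (x - ((2 : ℝ) ^ N)⁻¹ • y)) atTop
      (nhds (∫ y, φ y * f x)) :=
    tendsto_integral_of_dominated_convergence (fun y => ‖φ y‖ * SchwartzMap.seminorm ℝ 0 0 f)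
      (fun N => by fun_prop) (φ.integrable.norm.mul_const _)
      (fun N => .of_forall fun y => norm_mul_apply_le φ f y _)
      (.of_forall fun y => ((f.continuous.tendsto x).comp (h_shift y)).const_mul _)
  simpa [dyadic, dilate_conv_apply, integral_mul_const, hφ] using h_lim

theorem tendsto_conv_apply_of_bounded (K : 𝓢(V, ℂ)) {F : ℕ → 𝓢(V, ℂ)} {f : 𝓢(V, ℂ)} {B : ℝ}
    (hB : ∀ N x, ‖F N x‖ ≤ B) (hF : ∀ x, Tendsto (fun N => F N x) atTop (nhds (f x))) (x : V) :
    Tendsto (fun N => (K ⋆ F N) x) atTop (nhds ((K ⋆ f) x)) := by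
  simp only [conv_apply]
  refine tendsto_integral_of_dominated_convergence (fun y => ‖K y‖ * B) (fun N => by fun_prop)
    (K.integrable.norm.mul_const _) (fun N => .of_forall fun y => ?_)
    (.of_forall fun y => (hF _).const_mul _)
  rw [norm_mul]
  gcongr
  exact hB N _

theorem tendsto_conv_mul_dyadic_conv_apply {φ : 𝓢(V, ℂ)} (hφ : ∫ y, φ y = 1)
    (K f g : 𝓢(V, ℂ)) (x : V) :
    Tendsto (fun N => (K ⋆ ((dyadic φ N ⋆ f) ⊙ (dyadic φ N ⋆ g))) x) atTop
      (nhds ((K ⋆ (f ⊙ g)) x)) := by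
  refine tendsto_conv_apply_of_bounded K (B := (∫ y, ‖φ y‖) * SchwartzMap.seminorm ℝ 0 0 f *
    ((∫ y, ‖φ y‖) * SchwartzMap.seminorm ℝ 0 0 g)) (fun N y => ?_) (fun y => ?_) x
  · simp only [pairing_apply_apply, ContinuousLinearMap.mul_apply', norm_mul]
    gcongr <;> exact norm_dilate_conv_apply_le _ _ _ _
  · simpa using (tendsto_dyadic_conv_apply hφ f y).mul (tendsto_dyadic_conv_apply hφ g y)

theorem eLpNorm_schwartz_add_le {p : ℝ≥0∞} (hp : 1 ≤ p) (f g : 𝓢(V, ℂ)) :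
    eLpNorm (f + g : 𝓢(V, ℂ)) p ≤ eLpNorm f p + eLpNorm g p :=
  eLpNorm_add_le f.continuous.aestronglyMeasurable g.continuous.aestronglyMeasurable hp

/-! ### Littlewood–Paley decompositions and Besov norms -/

/-- The kernels of an inhomogeneous Littlewood–Paley decomposition: `𝓕 Ψ` is a low-pass cutoff at
frequency `1`, and `𝓕 ψ = 𝓕 Ψ (·/2) - 𝓕 Ψ`, so that `dyadic ψ j` is the kernel of the `j`-th block
and `dyadic Ψ j` that of the sum of all lower frequencies. -/
structure IsLPPair (ψ Ψ : 𝓢(V, ℂ)) : Prop where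
  fourier_low_eq_one : ∀ ξ, ‖ξ‖ ≤ 1 / 2 → 𝓕 Ψ ξ = 1
  fourier_low_eq_zero : ∀ ξ, 1 ≤ ‖ξ‖ → 𝓕 Ψ ξ = 0
  fourier_block_eq : ∀ ξ, 𝓕 ψ ξ = 𝓕 Ψ ((2 : ℝ)⁻¹ • ξ) - 𝓕 Ψ ξ

namespace IsLPPair

variable {ψ Ψ : 𝓢(V, ℂ)}

theorem fourier_block_eq_zero_of_le (hLP : IsLPPair ψ Ψ) {ξ : V} (hξ : ‖ξ‖ ≤ 1 / 2) :
    𝓕 ψ ξ = 0 := by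
  have h_half : ‖(2 : ℝ)⁻¹ • ξ‖ ≤ 1 / 2 := by
    rw [norm_smul, norm_inv, Real.norm_ofNat]
    linarith [norm_nonneg ξ]
  rw [hLP.fourier_block_eq, hLP.fourier_low_eq_one _ h_half, hLP.fourier_low_eq_one _ hξ, sub_self]

theorem fourier_block_eq_zero_of_ge (hLP : IsLPPair ψ Ψ) {ξ : V} (hξ : 2 ≤ ‖ξ‖) :
    𝓕 ψ ξ = 0 := by
  have h_half : 1 ≤ ‖(2 : ℝ)⁻¹ • ξ‖ := by
    rw [norm_smul, norm_inv, Real.norm_ofNat]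
    linarith
  rw [hLP.fourier_block_eq, hLP.fourier_low_eq_zero _ h_half,
    hLP.fourier_low_eq_zero _ (one_le_two.trans hξ), sub_self]

theorem integral_low (hLP : IsLPPair ψ Ψ) : ∫ x, Ψ x = 1 := by
  simpa [fourier_coe, Real.fourier_eq] using hLP.fourier_low_eq_one 0 (by simp)

theorem dyadic_low_succ_conv (hLP : IsLPPair ψ Ψ) (m : ℕ) (f : 𝓢(V, ℂ)) :
    dyadic Ψ (m + 1) ⋆ f = dyadic Ψ m ⋆ f + dyadic ψ m ⋆ f := by
  refine schwartz_ext_fourier fun ξ => ?_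
  have h_scale : ((2 : ℝ) ^ (m + 1))⁻¹ • ξ = (2 : ℝ)⁻¹ • ((2 : ℝ) ^ m)⁻¹ • ξ := by
    rw [smul_smul, pow_succ, mul_inv_rev]
  simp only [FourierTransform.fourier_add, add_apply, fourier_conv_apply,
    fourier_dyadic_apply, hLP.fourier_block_eq, h_scale]
  ring

theorem eLpNorm_dyadic_low_conv_le (hLP : IsLPPair ψ Ψ) {r : ℝ≥0∞} (hr : 1 ≤ r) (m : ℕ)
    (f : 𝓢(V, ℂ)) : eLpNorm (dyadic Ψ m ⋆ f) r ≤
      eLpNorm (Ψ ⋆ f) r + ∑ i ∈ Finset.range m, eLpNorm (dyadic ψ i ⋆ f) r := by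
  induction m with
  | zero => simp [dyadic_zero]
  | succ m ih =>
    rw [hLP.dyadic_low_succ_conv, Finset.sum_range_succ, ← add_assoc]
    exact (eLpNorm_schwartz_add_le hr _ _).trans (by gcongr)

theorem dyadic_low_conv_dyadic_conv (hLP : IsLPPair ψ Ψ) {φ : 𝓢(V, ℂ)} {k : ℕ}
    (hφ : ∀ ξ, (2 : ℝ) ^ k ≤ 2 * ‖ξ‖ → 𝓕 φ ξ = 0) (m : ℕ) (f : 𝓢(V, ℂ)) :
    dyadic Ψ (m + k) ⋆ (dyadic φ m ⋆ f) = dyadic φ m ⋆ f := by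
  refine schwartz_ext_fourier fun ξ => ?_
  simp only [fourier_conv_apply, fourier_dyadic_apply]
  rcases le_or_gt ((2 : ℝ) ^ k) (2 * ‖((2 : ℝ) ^ m)⁻¹ • ξ‖) with hξ | hξ
  · simp [hφ _ hξ]
  · have h_low : ‖((2 : ℝ) ^ (m + k))⁻¹ • ξ‖ ≤ 1 / 2 := by
      rw [pow_add, mul_inv_rev, mul_smul, norm_smul, norm_inv, norm_pow, Real.norm_ofNat,
        inv_mul_le_iff₀ (by positivity)]
      linarith
    rw [hLP.fourier_low_eq_one _ h_low, one_mul]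

theorem dyadic_conv_mul_dyadic_low_conv_eq_zero (hLP : IsLPPair ψ Ψ) {φ : 𝓢(V, ℂ)}
    (hφ : ∀ ξ, ‖ξ‖ ≤ 1 / 2 → 𝓕 φ ξ = 0) (m : ℕ) (f g : 𝓢(V, ℂ)) :
    dyadic φ (m + 2) ⋆ ((dyadic Ψ m ⋆ f) ⊙ (dyadic Ψ m ⋆ g)) = 0 := by
  have h_cutoff : ∀ (h : 𝓢(V, ℂ)) (ξ : V), 2 ^ m ≤ ‖ξ‖ → 𝓕 (dyadic Ψ m ⋆ h) ξ = 0 :=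
    fun h ξ hξ => by
      rw [fourier_conv_apply, fourier_dyadic_apply, hLP.fourier_low_eq_zero, zero_mul]
      rw [norm_smul, norm_inv, norm_pow, Real.norm_ofNat]
      rwa [le_inv_mul_iff₀ (by positivity), mul_one]
  refine schwartz_ext_fourier fun ξ => ?_
  rw [fourier_conv_apply, fourier_dyadic_apply, FourierTransform.fourier_zero]
  rcases le_or_gt (2 * 2 ^ m) ‖ξ‖ with hξ | hξ
  · rw [fourier_mul_eq_zero (h_cutoff f) (h_cutoff g) hξ, mul_zero, zero_apply]
  · rw [hφ, zero_mul, zero_apply]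
    rw [norm_smul, norm_inv, norm_pow, Real.norm_ofNat, inv_mul_le_iff₀ (by positivity), pow_add]
    linarith

end IsLPPair

theorem tsum_two_rpow_mul_ne_top {t : ℝ} (ht : t < 0) : ∑' i : ℕ, (2 : ℝ≥0∞) ^ (i * t) ≠ ∞ := by
  have h_ratio : (2 : ℝ≥0∞) ^ t < 1 :=
    ENNReal.rpow_lt_one_of_one_lt_of_neg ENNReal.one_lt_two ht
  simp_rw [mul_comm _ t, ENNReal.rpow_mul, ENNReal.rpow_natCast]
  rw [ENNReal.tsum_geometric, ENNReal.inv_ne_top]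
  exact (tsub_pos_of_lt h_ratio).ne'

/-- The weighted Littlewood–Paley coefficients `2^{js} ‖ψ_j ∗ f‖_{L^p}` of `f`. -/
def besovCoeff (ψ : 𝓢(V, ℂ)) (s : ℝ) (p : ℝ≥0∞) (f : 𝓢(V, ℂ)) (j : ℕ) : ℝ≥0∞ :=
  (2 : ℝ≥0∞) ^ (j * s) * eLpNorm (dyadic ψ j ⋆ f) p

/-- The inhomogeneous Besov norm of a complex-valued Schwartz function. Complex values make
Mathlib's Fourier transform and convolution of Schwartz functions available; on real functions it
agrees with `besovNorm`. -/
def schwartzBesovNorm (ψ Ψ : 𝓢(V, ℂ)) (s : ℝ) (p q : ℝ≥0∞) (f : 𝓢(V, ℂ)) : ℝ≥0∞ :=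
  eLpNorm (Ψ ⋆ f) p + lqNorm q (besovCoeff ψ s p f)

/-- The largest `L^r` norm of a low-frequency cutoff of `f`. -/
def lowNorm (Ψ : 𝓢(V, ℂ)) (r : ℝ≥0∞) (f : 𝓢(V, ℂ)) : ℝ≥0∞ :=
  ⨆ m, eLpNorm (dyadic Ψ m ⋆ f) r

section BesovNorm

variable {ψ Ψ : 𝓢(V, ℂ)} {s : ℝ} {p q r : ℝ≥0∞}

theorem eLpNorm_dyadic_conv_eq (ψ : 𝓢(V, ℂ)) (s : ℝ) (p : ℝ≥0∞) (f : 𝓢(V, ℂ)) (j : ℕ) :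
    eLpNorm (dyadic ψ j ⋆ f) p = (2 : ℝ≥0∞) ^ (j * -s) * besovCoeff ψ s p f j := by
  rw [besovCoeff, ← mul_assoc, ← ENNReal.rpow_add _ _ two_ne_zero ENNReal.ofNat_ne_top, mul_neg,
    neg_add_cancel, ENNReal.rpow_zero, one_mul]

theorem eLpNorm_low_conv_le_schwartzBesovNorm (f : 𝓢(V, ℂ)) :
    eLpNorm (Ψ ⋆ f) p ≤ schwartzBesovNorm ψ Ψ s p q f := le_self_add

theorem besovCoeff_le_schwartzBesovNorm (f : 𝓢(V, ℂ)) (hq : q ≠ 0) (j : ℕ) :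
    besovCoeff ψ s p f j ≤ schwartzBesovNorm ψ Ψ s p q f :=
  (enorm_le_eLpNorm_count (besovCoeff ψ s p f) j hq).trans le_add_self

theorem schwartzBesovNorm_zero : schwartzBesovNorm ψ Ψ s p q 0 = 0 := by
  have h_coeff : besovCoeff ψ s p 0 = 0 := funext fun j => by simp [besovCoeff]
  simp [schwartzBesovNorm, h_coeff]

theorem schwartzBesovNorm_add_le (hp : 1 ≤ p) (hq : 1 ≤ q) (f g : 𝓢(V, ℂ)) :
    schwartzBesovNorm ψ Ψ s p q (f + g) ≤
      schwartzBesovNorm ψ Ψ s p q f + schwartzBesovNorm ψ Ψ s p q g := by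
  have h_lp : ∀ φ : 𝓢(V, ℂ), eLpNorm (φ ⋆ (f + g)) p volume ≤
      eLpNorm (φ ⋆ f) p volume + eLpNorm (φ ⋆ g) p volume := fun φ => by
    rw [map_add]
    exact eLpNorm_schwartz_add_le hp _ _
  have h_lq : lqNorm q (besovCoeff ψ s p (f + g)) ≤
      lqNorm q (besovCoeff ψ s p f) + lqNorm q (besovCoeff ψ s p g) := by
    refine (eLpNorm_mono_enorm fun j => ?_).trans (eLpNorm_add_le
      measurable_from_nat.aestronglyMeasurable measurable_from_nat.aestronglyMeasurable hq)
    simp only [enorm_eq_self, Pi.add_apply, besovCoeff, ← mul_add]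
    gcongr
    exact h_lp _
  exact (add_le_add (h_lp Ψ) h_lq).trans_eq (add_add_add_comm _ _ _ _)

theorem schwartzBesovNorm_sum_le (hp : 1 ≤ p) (hq : 1 ≤ q) {ι : Type*} (t : Finset ι)
    (f : ι → 𝓢(V, ℂ)) :
    schwartzBesovNorm ψ Ψ s p q (∑ i ∈ t, f i) ≤ ∑ i ∈ t, schwartzBesovNorm ψ Ψ s p q (f i) :=
  Finset.le_sum_of_subadditive _ schwartzBesovNorm_zero.le (schwartzBesovNorm_add_le hp hq) t f

namespace IsLPPair

theorem exists_eLpNorm_dyadic_conv_le_eLpNorm_dyadic_conv (hLP : IsLPPair ψ Ψ) (hp : 1 ≤ p)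
    (hpr : p ≤ r) {φ : 𝓢(V, ℂ)} {k : ℕ} (hφ : ∀ ξ, (2 : ℝ) ^ k ≤ 2 * ‖ξ‖ → 𝓕 φ ξ = 0) :
    ∃ C : ℝ≥0∞, C ≠ ∞ ∧ ∀ (m : ℕ) (f : 𝓢(V, ℂ)), eLpNorm (dyadic φ m ⋆ f) r ≤
      C * (2 : ℝ≥0∞) ^ (m * (finrank ℝ V * (p⁻¹.toReal - r⁻¹.toReal))) *
        eLpNorm (dyadic φ m ⋆ f) p := by
  obtain ⟨C, hC, hbound⟩ := exists_eLpNorm_dyadic_conv_le Ψ hp hpr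
  set D := finrank ℝ V * (p⁻¹.toReal - r⁻¹.toReal)
  refine ⟨C * 2 ^ (k * D), by finiteness, fun m f => ?_⟩
  have h_rpow : (2 : ℝ≥0∞) ^ ((m + k : ℕ) * D) = 2 ^ (k * D) * 2 ^ (m * D) := by
    rw [← ENNReal.rpow_add _ _ two_ne_zero ENNReal.ofNat_ne_top]
    push_cast
    ring_nf
  have h := hbound (m + k) (dyadic φ m ⋆ f)
  rwa [hLP.dyadic_low_conv_dyadic_conv hφ, h_rpow, ← mul_assoc] at h

theorem exists_lowNorm_le (hLP : IsLPPair ψ Ψ) (hp : 1 ≤ p) (hpr : p ≤ r) (hq : q ≠ 0)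
    (hs : finrank ℝ V * (p⁻¹.toReal - r⁻¹.toReal) < s) :
    ∃ C : ℝ≥0∞, C ≠ ∞ ∧ ∀ f : 𝓢(V, ℂ), lowNorm Ψ r f ≤ C * schwartzBesovNorm ψ Ψ s p q f := by
  obtain ⟨C₀, hC₀, h_low⟩ := hLP.exists_eLpNorm_dyadic_conv_le_eLpNorm_dyadic_conv (φ := Ψ)
    (k := 1) hp hpr fun ξ hξ => hLP.fourier_low_eq_zero ξ (by linarith)
  obtain ⟨C₁, hC₁, h_block⟩ := hLP.exists_eLpNorm_dyadic_conv_le_eLpNorm_dyadic_conv (φ := ψ)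
    (k := 2) hp hpr fun ξ hξ => hLP.fourier_block_eq_zero_of_ge (by linarith)
  set D := finrank ℝ V * (p⁻¹.toReal - r⁻¹.toReal)
  have h_sum := tsum_two_rpow_mul_ne_top (sub_neg.2 hs)
  refine ⟨C₀ + C₁ * ∑' i : ℕ, (2 : ℝ≥0∞) ^ (i * (D - s)), by finiteness,
    fun f => iSup_le fun m => ?_⟩
  set B := schwartzBesovNorm ψ Ψ s p q f
  have h_low_le : eLpNorm (Ψ ⋆ f) r volume ≤ C₀ * B := by
    have h := h_low 0 f
    simp only [dyadic_zero, Nat.cast_zero, zero_mul, ENNReal.rpow_zero, mul_one] at h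
    exact h.trans (by gcongr; exact eLpNorm_low_conv_le_schwartzBesovNorm f)
  have h_block_le : ∀ i : ℕ,
      eLpNorm (dyadic ψ i ⋆ f) r volume ≤ C₁ * (2 : ℝ≥0∞) ^ (i * (D - s)) * B := fun i => by
    refine (h_block i f).trans ?_
    rw [eLpNorm_dyadic_conv_eq ψ s, sub_eq_add_neg, mul_add,
      ENNReal.rpow_add _ _ two_ne_zero ENNReal.ofNat_ne_top, ← mul_assoc, mul_assoc C₁]
    gcongr
    exact besovCoeff_le_schwartzBesovNorm f hq i
  calc eLpNorm (dyadic Ψ m ⋆ f) r volume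
      ≤ eLpNorm (Ψ ⋆ f) r volume +
          ∑ i ∈ Finset.range m, eLpNorm (dyadic ψ i ⋆ f) r volume :=
        hLP.eLpNorm_dyadic_low_conv_le (hp.trans hpr) m f
    _ ≤ C₀ * B + ∑' i : ℕ, C₁ * (2 : ℝ≥0∞) ^ (i * (D - s)) * B :=
        add_le_add h_low_le
          ((Finset.sum_le_sum fun i _ => h_block_le i).trans (ENNReal.sum_le_tsum _))
    _ = _ := by rw [ENNReal.tsum_mul_right, ENNReal.tsum_mul_left, add_mul]

end IsLPPair

end BesovNorm

/-! ### The paraproduct estimate -/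

section Product

variable {ψ Ψ : 𝓢(V, ℂ)} {s : ℝ} {p q r pb : ℝ≥0∞}

/-- The `j`-th coefficient of the paraproduct bound for `f g`: each factor contributes its block at
frequency `2^j`, weighted by the size of the low frequencies of the other factor. -/
def crossCoeff (ψ Ψ : 𝓢(V, ℂ)) (s : ℝ) (p r : ℝ≥0∞) (f g : 𝓢(V, ℂ)) (j : ℕ) : ℝ≥0∞ :=
  lowNorm Ψ r g * besovCoeff ψ s p f j + lowNorm Ψ r f * besovCoeff ψ s p g j

/-- The right-hand side `‖f‖_{B^s_{p,q}} ‖g‖_{low} + ‖f‖_{low} ‖g‖_{B^s_{p,q}}` of the paraproduct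
estimate, `‖·‖_{low}` being `lowNorm Ψ r`. -/
def crossNorm (ψ Ψ : 𝓢(V, ℂ)) (s : ℝ) (p q r : ℝ≥0∞) (f g : 𝓢(V, ℂ)) : ℝ≥0∞ :=
  lowNorm Ψ r g * schwartzBesovNorm ψ Ψ s p q f + lowNorm Ψ r f * schwartzBesovNorm ψ Ψ s p q g

theorem crossCoeff_le_crossNorm (hq : q ≠ 0) (f g : 𝓢(V, ℂ)) (j : ℕ) :
    crossCoeff ψ Ψ s p r f g j ≤ crossNorm ψ Ψ s p q r f g := by
  unfold crossCoeff crossNorm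
  gcongr <;> exact besovCoeff_le_schwartzBesovNorm _ hq j

theorem lqNorm_crossCoeff_le_crossNorm (hq : 1 ≤ q) (f g : 𝓢(V, ℂ)) :
    lqNorm q (crossCoeff ψ Ψ s p r f g) ≤ crossNorm ψ Ψ s p q r f g := by
  have hq0 := (one_pos.trans_le hq).ne'
  refine (eLpNorm_add_le (f := fun j => lowNorm Ψ r g * besovCoeff ψ s p f j)
    measurable_from_nat.aestronglyMeasurable measurable_from_nat.aestronglyMeasurable hq).trans ?_
  refine add_le_add ((lqNorm_const_mul hq0 _ _).trans_le ?_)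
    ((lqNorm_const_mul hq0 _ _).trans_le ?_) <;> gcongr <;> exact le_add_self

theorem eLpNorm_dyadic_low_conv_le_lowNorm (m : ℕ) (f : 𝓢(V, ℂ)) :
    eLpNorm (dyadic Ψ m ⋆ f) r ≤ lowNorm Ψ r f :=
  le_iSup (fun m => eLpNorm (dyadic Ψ m ⋆ f) r volume) m

theorem eLpNorm_conv_mul_le [ENNReal.HolderTriple p r pb] (hpb : 1 ≤ pb) (K f g : 𝓢(V, ℂ)) :
    eLpNorm (K ⋆ (f ⊙ g)) pb ≤ eLpNorm K 1 * (eLpNorm f p * eLpNorm g r) := by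
  have h_coe : (f ⊙ g : V → ℂ) = (f : V → ℂ) • (g : V → ℂ) :=
    funext fun x => by simp only [pairing_apply_apply, ContinuousLinearMap.mul_apply']; rfl
  have h_holder : eLpNorm (f ⊙ g) pb volume ≤ eLpNorm f p volume * eLpNorm g r volume := by
    rw [h_coe]
    exact eLpNorm_smul_le_mul_eLpNorm g.continuous.aestronglyMeasurable
      f.continuous.aestronglyMeasurable
  exact (eLpNorm_conv_le_one_mul hpb K (f ⊙ g)).trans (by gcongr)

namespace IsLPPair

theorem dyadic_low_succ_conv_mul (hLP : IsLPPair ψ Ψ) (m : ℕ) (f g : 𝓢(V, ℂ)) :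
    (dyadic Ψ (m + 1) ⋆ f) ⊙ (dyadic Ψ (m + 1) ⋆ g) =
      (dyadic Ψ m ⋆ f) ⊙ (dyadic Ψ m ⋆ g) + ((dyadic ψ m ⋆ f) ⊙ (dyadic Ψ (m + 1) ⋆ g) +
        (dyadic ψ m ⋆ g) ⊙ (dyadic Ψ m ⋆ f)) := by
  rw [hLP.dyadic_low_succ_conv m f, hLP.dyadic_low_succ_conv m g]
  ext x
  simp only [pairing_apply_apply, ContinuousLinearMap.mul_apply', add_apply]
  ring

theorem eLpNorm_conv_dyadic_low_succ_conv_mul_le [ENNReal.HolderTriple p r pb]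
    (hLP : IsLPPair ψ Ψ) (hpb : 1 ≤ pb) (s : ℝ) (K f g : 𝓢(V, ℂ)) (m : ℕ) :
    eLpNorm (K ⋆ ((dyadic Ψ (m + 1) ⋆ f) ⊙ (dyadic Ψ (m + 1) ⋆ g))) pb ≤
      eLpNorm (K ⋆ ((dyadic Ψ m ⋆ f) ⊙ (dyadic Ψ m ⋆ g))) pb +
        eLpNorm K 1 * ((2 : ℝ≥0∞) ^ (m * -s) * crossCoeff ψ Ψ s p r f g m) := by
  have h_block : ∀ (k : ℕ) (f g : 𝓢(V, ℂ)),
      eLpNorm (K ⋆ ((dyadic ψ m ⋆ f) ⊙ (dyadic Ψ k ⋆ g))) pb volume ≤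
        eLpNorm K 1 volume * ((2 : ℝ≥0∞) ^ (m * -s) * (lowNorm Ψ r g * besovCoeff ψ s p f m)) :=
    fun k f g => by
      refine (eLpNorm_conv_mul_le (p := p) (r := r) hpb _ _ _).trans ?_
      rw [eLpNorm_dyadic_conv_eq ψ s, mul_assoc, mul_comm (besovCoeff _ _ _ _ _)]
      gcongr
      exact eLpNorm_dyadic_low_conv_le_lowNorm k g
  rw [hLP.dyadic_low_succ_conv_mul, map_add, map_add, crossCoeff, mul_add, mul_add]
  exact (eLpNorm_schwartz_add_le hpb _ _).trans (add_le_add_right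
    ((eLpNorm_schwartz_add_le hpb _ _).trans (add_le_add (h_block _ f g) (h_block _ g f))) _)

theorem eLpNorm_conv_mul_le_tsum [ENNReal.HolderTriple p r pb]
    (hLP : IsLPPair ψ Ψ) (hpb : 1 ≤ pb) (s : ℝ) (K f g : 𝓢(V, ℂ)) (m : ℕ) :
    eLpNorm (K ⋆ (f ⊙ g)) pb ≤ eLpNorm (K ⋆ ((dyadic Ψ m ⋆ f) ⊙ (dyadic Ψ m ⋆ g))) pb +
      eLpNorm K 1 * ∑' i : ℕ,
        (2 : ℝ≥0∞) ^ ((m + i : ℕ) * -s) * crossCoeff ψ Ψ s p r f g (m + i) := by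
  set w : ℕ → ℝ≥0∞ := fun i =>
    (2 : ℝ≥0∞) ^ ((m + i : ℕ) * -s) * crossCoeff ψ Ψ s p r f g (m + i)
  set P : ℕ → 𝓢(V, ℂ) := fun N => K ⋆ ((dyadic Ψ N ⋆ f) ⊙ (dyadic Ψ N ⋆ g))
  have h_partial : ∀ N, eLpNorm (P (m + N)) pb volume ≤
      eLpNorm (P m) pb volume + eLpNorm K 1 volume * ∑ i ∈ Finset.range N, w i := fun N => by
    induction N with
    | zero => simp
    | succ N ih =>
      rw [Finset.sum_range_succ, mul_add, ← add_assoc (eLpNorm (P m) pb volume)]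
      exact (hLP.eLpNorm_conv_dyadic_low_succ_conv_mul_le (p := p) (r := r) hpb s K f g
        (m + N)).trans (add_le_add_left ih _)
  have h_lim : ∀ x, Tendsto (fun N => P (m + N) x) atTop (nhds ((K ⋆ (f ⊙ g)) x)) := fun x =>
    (tendsto_conv_mul_dyadic_conv_apply hLP.integral_low K f g x).comp
      (tendsto_atTop_mono (Nat.le_add_left · m) tendsto_id)
  refine (Lp.eLpNorm_lim_le_liminf_eLpNorm
    (fun N => (P (m + N)).continuous.aestronglyMeasurable) _ (.of_forall h_lim)).trans
    (liminf_le_of_le (by isBoundedDefault) fun b hb => ?_)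
  obtain ⟨N, hN⟩ := hb.exists
  exact (hN.trans (h_partial N)).trans (by gcongr; exact ENNReal.sum_le_tsum _)

theorem eLpNorm_conv_mul_le_crossNorm [ENNReal.HolderTriple p r pb]
    (hLP : IsLPPair ψ Ψ) (hpb : 1 ≤ pb) (hq : q ≠ 0) (s : ℝ) (K f g : 𝓢(V, ℂ)) :
    eLpNorm (K ⋆ (f ⊙ g)) pb ≤
      eLpNorm K 1 * (1 + ∑' i : ℕ, (2 : ℝ≥0∞) ^ (i * -s)) * crossNorm ψ Ψ s p q r f g := by
  have h_low : eLpNorm (K ⋆ ((dyadic Ψ 0 ⋆ f) ⊙ (dyadic Ψ 0 ⋆ g))) pb volume ≤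
      eLpNorm K 1 volume * crossNorm ψ Ψ s p q r f g := by
    refine (eLpNorm_conv_mul_le (p := p) (r := r) hpb _ _ _).trans ?_
    rw [mul_comm (eLpNorm (dyadic Ψ 0 ⋆ f) p volume), dyadic_zero]
    gcongr
    refine le_add_right ?_
    gcongr
    · simpa only [dyadic_zero] using eLpNorm_dyadic_low_conv_le_lowNorm (r := r) 0 g
    · exact eLpNorm_low_conv_le_schwartzBesovNorm f
  refine (hLP.eLpNorm_conv_mul_le_tsum (p := p) (r := r) hpb s K f g 0).trans ?_
  rw [mul_assoc, add_mul, one_mul, mul_add, ← ENNReal.tsum_mul_right]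
  simp only [Nat.zero_add]
  gcongr with i
  exact crossCoeff_le_crossNorm hq f g i

end IsLPPair

end Product

section Derivative

variable {ψ Ψ : 𝓢(V, ℂ)} {s : ℝ} {p q r pb : ℝ≥0∞}

namespace IsLPPair

theorem besovCoeff_lineDeriv_mul_add_two_le [ENNReal.HolderTriple p r pb]
    (hLP : IsLPPair ψ Ψ) (hpb : 1 ≤ pb) (s : ℝ) (e : V) (f g : 𝓢(V, ℂ)) (j : ℕ) :
    besovCoeff ψ (s - 1) pb (∂_{e} (f ⊙ g)) (j + 2) ≤
      (2 : ℝ≥0∞) ^ (2 * s) * eLpNorm (∂_{e} ψ : 𝓢(V, ℂ)) 1 *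
        ∑' i : ℕ, (2 : ℝ≥0∞) ^ (i * -s) * crossCoeff ψ Ψ s p r f g (j + i) := by
  have h_supp : ∀ ξ, ‖ξ‖ ≤ 1 / 2 → 𝓕 (∂_{e} ψ) ξ = 0 := fun ξ hξ => by
    rw [fourier_lineDeriv_apply, hLP.fourier_block_eq_zero_of_le hξ, mul_zero]
  have h_block : dyadic ψ (j + 2) ⋆ ∂_{e} (f ⊙ g) =
      (2 : ℝ) ^ (j + 2) • (dyadic (∂_{e} ψ) (j + 2) ⋆ (f ⊙ g)) := by
    rw [← lineDeriv_conv_comm, lineDeriv_dyadic]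
    simp
  have h_conv : eLpNorm (dyadic (∂_{e} ψ) (j + 2) ⋆ (f ⊙ g)) pb volume ≤
      eLpNorm (∂_{e} ψ : 𝓢(V, ℂ)) 1 volume * ∑' i : ℕ,
        (2 : ℝ≥0∞) ^ ((j + i : ℕ) * -s) * crossCoeff ψ Ψ s p r f g (j + i) := by
    have h := hLP.eLpNorm_conv_mul_le_tsum (p := p) (r := r) hpb s
      (dyadic (∂_{e} ψ) (j + 2)) f g j
    rw [hLP.dyadic_conv_mul_dyadic_low_conv_eq_zero h_supp, eLpNorm_one_dyadic] at h
    simpa using h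
  have h_weight : ∀ i : ℕ, (2 : ℝ≥0∞) ^ ((j + 2 : ℕ) * (s - 1)) * (2 ^ (j + 2) *
      2 ^ ((j + i : ℕ) * -s)) = 2 ^ (2 * s) * 2 ^ (i * -s) := fun i => by
    rw [← ENNReal.rpow_natCast]
    simp only [← ENNReal.rpow_add _ _ two_ne_zero ENNReal.ofNat_ne_top]
    push_cast
    ring_nf
  calc besovCoeff ψ (s - 1) pb (∂_{e} (f ⊙ g)) (j + 2)
      = (2 : ℝ≥0∞) ^ ((j + 2 : ℕ) * (s - 1)) *
          (2 ^ (j + 2) * eLpNorm (dyadic (∂_{e} ψ) (j + 2) ⋆ (f ⊙ g)) pb volume) := by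
        rw [besovCoeff, h_block]
        congr 1
        exact (eLpNorm_const_smul ((2 : ℝ) ^ (j + 2)) _ pb volume).trans (by
          simp [enorm_pow, Real.enorm_of_nonneg zero_le_two])
    _ ≤ (2 : ℝ≥0∞) ^ ((j + 2 : ℕ) * (s - 1)) * (2 ^ (j + 2) *
          (eLpNorm (∂_{e} ψ : 𝓢(V, ℂ)) 1 volume * ∑' i : ℕ,
            (2 : ℝ≥0∞) ^ ((j + i : ℕ) * -s) * crossCoeff ψ Ψ s p r f g (j + i))) := by gcongr
    _ = _ := by
        simp only [← ENNReal.tsum_mul_left]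
        refine tsum_congr fun i => ?_
        rw [mul_left_comm (eLpNorm _ _ _), ← mul_assoc (2 ^ (j + 2)), ← mul_assoc, h_weight]
        ring

theorem lqNorm_besovCoeff_lineDeriv_mul_add_two_le [ENNReal.HolderTriple p r pb]
    (hLP : IsLPPair ψ Ψ) (hpb : 1 ≤ pb) (hq : 1 ≤ q) (s : ℝ) (e : V) (f g : 𝓢(V, ℂ)) :
    lqNorm q (fun j => besovCoeff ψ (s - 1) pb (∂_{e} (f ⊙ g)) (j + 2)) ≤
      (2 : ℝ≥0∞) ^ (2 * s) * eLpNorm (∂_{e} ψ : 𝓢(V, ℂ)) 1 *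
        (∑' i : ℕ, (2 : ℝ≥0∞) ^ (i * -s)) * crossNorm ψ Ψ s p q r f g := by
  set H : ℝ≥0∞ := 2 ^ (2 * s) * eLpNorm (∂_{e} ψ : 𝓢(V, ℂ)) 1 volume
  calc lqNorm q (fun j => besovCoeff ψ (s - 1) pb (∂_{e} (f ⊙ g)) (j + 2))
      ≤ lqNorm q (fun j => H * ∑' i : ℕ,
          (2 : ℝ≥0∞) ^ (i * -s) * crossCoeff ψ Ψ s p r f g (j + i)) :=
        eLpNorm_mono_enorm fun j => hLP.besovCoeff_lineDeriv_mul_add_two_le hpb s e f g j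
    _ ≤ H * ((∑' i : ℕ, (2 : ℝ≥0∞) ^ (i * -s)) * lqNorm q (crossCoeff ψ Ψ s p r f g)) := by
        rw [lqNorm_const_mul (one_pos.trans_le hq).ne']
        gcongr
        exact lqNorm_tsum_mul_shift_le hq _ _
    _ ≤ H * (∑' i : ℕ, (2 : ℝ≥0∞) ^ (i * -s)) * crossNorm ψ Ψ s p q r f g := by
        rw [← mul_assoc]
        gcongr
        exact lqNorm_crossCoeff_le_crossNorm hq f g

theorem eLpNorm_conv_lineDeriv_mul_le [ENNReal.HolderTriple p r pb]
    (hLP : IsLPPair ψ Ψ) (hpb : 1 ≤ pb) (hq : q ≠ 0) (s : ℝ) (e : V) (K f g : 𝓢(V, ℂ)) :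
    eLpNorm (K ⋆ ∂_{e} (f ⊙ g)) pb ≤ eLpNorm (∂_{e} K : 𝓢(V, ℂ)) 1 *
      (1 + ∑' i : ℕ, (2 : ℝ≥0∞) ^ (i * -s)) * crossNorm ψ Ψ s p q r f g := by
  rw [← lineDeriv_conv_comm]
  exact hLP.eLpNorm_conv_mul_le_crossNorm hpb hq s (∂_{e} K) f g

theorem exists_schwartzBesovNorm_lineDeriv_mul_le_crossNorm [ENNReal.HolderTriple p r pb]
    (hLP : IsLPPair ψ Ψ) (hpb : 1 ≤ pb) (hq : 1 ≤ q) (hs : 0 < s) (e : V) :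
    ∃ C : ℝ≥0∞, C ≠ ∞ ∧ ∀ f g : 𝓢(V, ℂ), schwartzBesovNorm ψ Ψ (s - 1) pb q (∂_{e} (f ⊙ g)) ≤
      C * crossNorm ψ Ψ s p q r f g := by
  have hq0 := (one_pos.trans_le hq).ne'
  have h_finite : ∀ K : 𝓢(V, ℂ), eLpNorm (∂_{e} K : 𝓢(V, ℂ)) 1 volume ≠ ∞ := fun K =>
    ((∂_{e} K : 𝓢(V, ℂ)).eLpNorm_lt_top 1 volume).ne
  have hG := tsum_two_rpow_mul_ne_top (neg_lt_zero.2 hs)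
  set G := ∑' i : ℕ, (2 : ℝ≥0∞) ^ (i * -s)
  set A : 𝓢(V, ℂ) → ℝ≥0∞ := fun K => eLpNorm (∂_{e} K : 𝓢(V, ℂ)) 1 volume * (1 + G)
  set W : ℕ → ℝ≥0∞ := fun j => (2 : ℝ≥0∞) ^ (j * (s - 1)) * A (dyadic ψ j)
  set H : ℝ≥0∞ := 2 ^ (2 * s) * eLpNorm (∂_{e} ψ : 𝓢(V, ℂ)) 1 volume
  have hA : ∀ K, A K ≠ ∞ := fun K => ENNReal.mul_ne_top (h_finite K) (by finiteness)
  have hW : ∀ j, W j ≠ ∞ := fun j => ENNReal.mul_ne_top (by finiteness) (hA _)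
  have hH : H ≠ ∞ := ENNReal.mul_ne_top (by finiteness) (h_finite ψ)
  refine ⟨A Ψ + (W 0 + (W 1 + H * G)), by finiteness [hA Ψ, hW 0, hW 1], fun f g => ?_⟩
  set M := crossNorm ψ Ψ s p q r f g
  set a := besovCoeff ψ (s - 1) pb (∂_{e} (f ⊙ g))
  have h_low : ∀ K : 𝓢(V, ℂ), eLpNorm (K ⋆ ∂_{e} (f ⊙ g)) pb volume ≤ A K * M := fun K =>
    hLP.eLpNorm_conv_lineDeriv_mul_le hpb hq0 s e K f g
  have h_coeff : ∀ j, a j ≤ W j * M := fun j => by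
    rw [mul_assoc]
    exact mul_le_mul_right (h_low _) _
  have h_high : lqNorm q (fun j => a (j + 2)) ≤ H * G * M :=
    hLP.lqNorm_besovCoeff_lineDeriv_mul_add_two_le hpb hq s e f g
  calc schwartzBesovNorm ψ Ψ (s - 1) pb q (∂_{e} (f ⊙ g))
      ≤ A Ψ * M + (W 0 * M + (W 1 * M + H * G * M)) := by
        refine add_le_add (h_low Ψ) ((lqNorm_le_add_lqNorm_succ hq a).trans
          (add_le_add (h_coeff 0) ?_))
        exact (lqNorm_le_add_lqNorm_succ hq _).trans (add_le_add (h_coeff 1) h_high)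
    _ = _ := by ring

theorem exists_schwartzBesovNorm_lineDeriv_mul_le [ENNReal.HolderTriple p r pb]
    (hLP : IsLPPair ψ Ψ) (hpb : 1 ≤ pb) (hp : 1 ≤ p) (hpr : p ≤ r) (hq : 1 ≤ q) (hs : 0 < s)
    (hsr : finrank ℝ V * (p⁻¹.toReal - r⁻¹.toReal) < s) (e : V) :
    ∃ C : ℝ≥0∞, C ≠ ∞ ∧ ∀ f g : 𝓢(V, ℂ), schwartzBesovNorm ψ Ψ (s - 1) pb q (∂_{e} (f ⊙ g)) ≤
      C * (schwartzBesovNorm ψ Ψ s p q f * schwartzBesovNorm ψ Ψ s p q g) := by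
  obtain ⟨C₁, hC₁, h_low⟩ := hLP.exists_lowNorm_le hp hpr (one_pos.trans_le hq).ne' hsr
  obtain ⟨C₂, hC₂, h_prod⟩ :=
    hLP.exists_schwartzBesovNorm_lineDeriv_mul_le_crossNorm (p := p) (r := r) hpb hq hs e
  refine ⟨C₂ * (2 * C₁), by finiteness, fun f g => (h_prod f g).trans ?_⟩
  rw [mul_assoc]
  gcongr
  calc crossNorm ψ Ψ s p q r f g
      ≤ C₁ * schwartzBesovNorm ψ Ψ s p q g * schwartzBesovNorm ψ Ψ s p q f +
          C₁ * schwartzBesovNorm ψ Ψ s p q f * schwartzBesovNorm ψ Ψ s p q g := by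
        unfold crossNorm
        gcongr <;> exact h_low _
    _ = _ := by ring

end IsLPPair

end Derivative

end SchwartzFourier

/-! ### Real-valued functions -/

/-- A real-valued Schwartz function seen as complex-valued. -/
def complexify {V : Type*} [NormedAddCommGroup V] [NormedSpace ℝ V] (f : 𝓢(V, ℝ)) : 𝓢(V, ℂ) :=
  postcompCLM Complex.ofRealCLM f

theorem complexify_apply {V : Type*} [NormedAddCommGroup V] [NormedSpace ℝ V] (f : 𝓢(V, ℝ))
    (x : V) : complexify f x = (f x : ℂ) := rfl

theorem fourier_complexify_apply (f : 𝓢(Rn n, ℝ)) (ξ : Rn n) : 𝓕 (complexify f) ξ = ftC f ξ := by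
  rw [fourier_coe]
  rfl

namespace IsLPF

variable {ψ₀ Ψ : 𝓢(Rn n, ℝ)}

theorem ftC_eq_zero_of_le (hψ : IsLPF n ψ₀) {ξ : Rn n} (hξ : ‖ξ‖ ≤ 1 / 2) : ftC ψ₀ ξ = 0 := by
  by_contra h
  exact hξ.not_gt (hψ.ft_supp ξ h).1

theorem ftC_eq_zero_of_ge (hψ : IsLPF n ψ₀) {ξ : Rn n} (hξ : 2 ≤ ‖ξ‖) : ftC ψ₀ ξ = 0 := by
  by_contra h
  exact hξ.not_gt (hψ.ft_supp ξ h).2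

theorem ftC_two_zpow_neg_smul_eq_zero (hψ : IsLPF n ψ₀) {ξ : Rn n} (hξ : ‖ξ‖ ≤ 1 / 2) (k : ℕ) :
    ftC ψ₀ ((2 : ℝ) ^ (-(k : ℤ)) • ξ) = 0 := by
  refine hψ.ftC_eq_zero_of_le (le_trans ?_ hξ)
  rw [norm_smul, norm_zpow, Real.norm_ofNat, zpow_neg, zpow_natCast]
  exact mul_le_of_le_one_left (norm_nonneg ξ) (inv_le_one_of_one_le₀ (one_le_pow₀ one_le_two))

theorem summable_ftC (hψ : IsLPF n ψ₀) (ξ : Rn n) :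
    Summable fun k : ℕ => ftC ψ₀ ((2 : ℝ) ^ (-(k : ℤ)) • ξ) := by
  rcases eq_or_ne ξ 0 with rfl | hξ
  · exact (summable_congr (hψ.ftC_two_zpow_neg_smul_eq_zero (by simp))).2 summable_zero
  · exact (hψ.ft_sum ξ hξ).summable.comp_injective Nat.cast_injective

theorem tsum_ftC_eq_one (hψ : IsLPF n ψ₀) {ξ : Rn n} (hξ : 1 ≤ ‖ξ‖) :
    ∑' k : ℕ, ftC ψ₀ ((2 : ℝ) ^ (-(k : ℤ)) • ξ) = 1 := by
  have h_neg : ∀ k : ℤ, k ∉ Set.range ((↑) : ℕ → ℤ) → ftC ψ₀ ((2 : ℝ) ^ (-k) • ξ) = 0 :=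
    fun k hk => by
      have hk : 1 ≤ -k := by
        by_contra h
        exact hk ⟨k.toNat, Int.toNat_of_nonneg (by omega)⟩
      refine hψ.ftC_eq_zero_of_ge ?_
      rw [norm_smul, norm_zpow, Real.norm_ofNat]
      calc (2 : ℝ) = 2 ^ (1 : ℤ) * 1 := by norm_num
        _ ≤ 2 ^ (-k) * ‖ξ‖ := by gcongr; exact one_le_two
  exact ((Nat.cast_injective.hasSum_iff h_neg).2
    (hψ.ft_sum ξ (norm_pos_iff.1 (one_pos.trans_le hξ)))).tsum_eq

theorem isLPPair (hψ : IsLPF n ψ₀) (hΨ : IsLowPiece ψ₀ Ψ) :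
    IsLPPair (complexify ψ₀) (complexify Ψ) where
  fourier_low_eq_one ξ hξ := by
    simp only [fourier_complexify_apply, hΨ ξ, hψ.ftC_two_zpow_neg_smul_eq_zero hξ, tsum_zero,
      sub_zero]
  fourier_low_eq_zero ξ hξ := by
    rw [fourier_complexify_apply, hΨ ξ, hψ.tsum_ftC_eq_one hξ, sub_self]
  fourier_block_eq ξ := by
    have h_shift : ∀ k : ℕ, (2 : ℝ) ^ (-(k : ℤ)) • (2 : ℝ)⁻¹ • ξ =
        (2 : ℝ) ^ (-((k + 1 : ℕ) : ℤ)) • ξ := fun k => by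
      rw [smul_smul, ← zpow_neg_one, ← zpow_add₀ two_ne_zero]
      push_cast
      ring_nf
    simp only [fourier_complexify_apply, hΨ _, h_shift]
    rw [(hψ.summable_ftC ξ).tsum_eq_zero_add]
    simp

end IsLPF

section Complexify

variable {ψ₀ Ψ : 𝓢(Rn n, ℝ)} {s : ℝ} {p q pb : ℝ≥0∞}

theorem dyadic_complexify_apply (ψ₀ : 𝓢(Rn n, ℝ)) (j : ℕ) (x : Rn n) :
    dyadic (complexify ψ₀) j x = (lpKernel ψ₀ j x : ℂ) := by
  simp [dyadic, dilate_apply, complexify_apply, lpKernel, zpow_mul]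

theorem eLpNorm_conv_eq_eLpNorm_convolution {K h : 𝓢(Rn n, ℂ)} {k f : Rn n → ℝ}
    (hK : ∀ x, K x = (k x : ℂ)) (hh : ∀ x, h x = (f x : ℂ)) (p : ℝ≥0∞) :
    eLpNorm (K ⋆ h) p =
      eLpNorm (MeasureTheory.convolution k f (ContinuousLinearMap.mul ℝ ℝ) volume) p := by
  refine eLpNorm_congr_norm_ae (.of_forall fun x => ?_)
  rw [conv_apply, MeasureTheory.convolution, ← Complex.norm_real, ← integral_complex_ofReal]
  simp [hK, hh]

theorem besovNorm_eq_schwartzBesovNorm (hq : q ≠ 0) {h : 𝓢(Rn n, ℂ)} {f : Rn n → ℝ}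
    (hh : ∀ x, h x = (f x : ℂ)) : besovNorm ψ₀ Ψ s p q f =
      schwartzBesovNorm (complexify ψ₀) (complexify Ψ) s p q h := by
  have h_coeff : besovCoeff (complexify ψ₀) s p h = fun j : ℕ =>
      ENNReal.ofReal ((2 : ℝ) ^ ((j : ℝ) * s)) * eLpNorm (lpProj ψ₀ j f) p volume :=
    funext fun j => by
      rw [besovCoeff, eLpNorm_conv_eq_eLpNorm_convolution (dyadic_complexify_apply ψ₀ j) hh,
        ← ENNReal.ofReal_rpow_of_pos zero_lt_two, ENNReal.ofReal_ofNat]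
      rfl
  rw [schwartzBesovNorm, eLpNorm_conv_eq_eLpNorm_convolution (complexify_apply Ψ) hh, besovNorm,
    h_coeff]
  split_ifs with hq'
  · rw [hq', lqNorm_top]
  · rw [lqNorm_eq_tsum hq hq']

theorem lineDeriv_complexify_mul_apply (f g : 𝓢(Rn n, ℝ)) (k : Fin n) (x : Rn n) :
    ∂_{EuclideanSpace.single k (1 : ℝ)} (complexify f ⊙ complexify g) x =
      (pderiv' k (fun y => f y * g y) x : ℂ) := by
  have h_coe : (complexify f ⊙ complexify g : Rn n → ℂ) =
      Complex.ofRealCLM ∘ fun y => f y * g y := by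
    ext y
    simp [complexify_apply]
  have h_diff : DifferentiableAt ℝ (fun y => f y * g y) x :=
    f.differentiableAt.mul g.differentiableAt
  rw [lineDerivOp_apply_eq_fderiv, h_coe,
    fderiv_comp x Complex.ofRealCLM.differentiableAt h_diff, Complex.ofRealCLM.fderiv]
  rfl

theorem exists_holderTriple_of_le_of_le_two_mul (hpb : 1 ≤ pb) (hpbp : pb ≤ p)
    (hp2pb : p ≤ 2 * pb) : ∃ r, ENNReal.HolderTriple p r pb ∧ p ≤ r ∧
      p⁻¹.toReal - r⁻¹.toReal = 2 * p⁻¹.toReal - pb⁻¹.toReal := by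
  have h_inv_le : p⁻¹ ≤ pb⁻¹ := ENNReal.inv_le_inv.2 hpbp
  have h_inv_le_two : pb⁻¹ ≤ p⁻¹ + p⁻¹ := by
    calc pb⁻¹ = 2 * (2 * pb)⁻¹ := by
          rw [ENNReal.mul_inv (by simp) (by simp), ← mul_assoc,
            ENNReal.mul_inv_cancel two_ne_zero ENNReal.ofNat_ne_top, one_mul]
      _ ≤ 2 * p⁻¹ := by gcongr
      _ = p⁻¹ + p⁻¹ := two_mul _
  have h_top : pb⁻¹ ≠ ∞ := ENNReal.inv_ne_top.2 (one_pos.trans_le hpb).ne'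
  refine ⟨(pb⁻¹ - p⁻¹)⁻¹, ⟨?_⟩, ?_, ?_⟩
  · rw [inv_inv, add_tsub_cancel_of_le h_inv_le]
  · rw [ENNReal.le_inv_iff_le_inv]
    exact tsub_le_iff_left.2 h_inv_le_two
  · rw [inv_inv, ENNReal.toReal_sub_of_le h_inv_le h_top]
    ring

theorem exists_besovNorm_sum_pderiv_mul_le (hψ : IsLPF n ψ₀) (hΨ : IsLowPiece ψ₀ Ψ)
    (hs : 0 < s) (hq : 1 ≤ q) (hpb : 1 ≤ pb) (hpbp : pb ≤ p) (hp2pb : p ≤ 2 * pb)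
    (hsn : (n : ℝ) * (2 * p⁻¹.toReal - pb⁻¹.toReal) < s) :
    ∃ C : ℝ≥0∞, C ≠ ∞ ∧ ∀ (f : 𝓢(Rn n, ℝ)) (g : Fin n → 𝓢(Rn n, ℝ)),
      besovNorm ψ₀ Ψ (s - 1) pb q (fun x => ∑ k, pderiv' k (fun y => f y * g k y) x) ≤
        C * (besovNorm ψ₀ Ψ s p q f * ∑ k, besovNorm ψ₀ Ψ s p q (g k)) := by
  have hq0 := (one_pos.trans_le hq).ne'
  obtain ⟨r, h_holder, hpr, h_exp⟩ := exists_holderTriple_of_le_of_le_two_mul hpb hpbp hp2pb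
  choose C hC h_bound using fun k : Fin n =>
    (hψ.isLPPair hΨ).exists_schwartzBesovNorm_lineDeriv_mul_le (q := q) hpb (hpb.trans hpbp) hpr
      hq hs (by rwa [finrank_euclideanSpace_fin, h_exp]) (EuclideanSpace.single k (1 : ℝ))
  refine ⟨∑ k, C k, ENNReal.sum_ne_top.2 fun k _ => hC k, fun f g => ?_⟩
  have h_complexify : ∀ x, (∑ k, ∂_{EuclideanSpace.single k (1 : ℝ)}
      (complexify f ⊙ complexify (g k))) x =
        ((∑ k, pderiv' k (fun y => f y * g k y) x : ℝ) : ℂ) := fun x => by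
    simp [lineDeriv_complexify_mul_apply]
  rw [besovNorm_eq_schwartzBesovNorm hq0 h_complexify]
  refine (schwartzBesovNorm_sum_le hpb hq _ _).trans ?_
  rw [Finset.mul_sum, Finset.mul_sum]
  refine Finset.sum_le_sum fun k _ => (h_bound k (complexify f) (complexify (g k))).trans ?_
  rw [besovNorm_eq_schwartzBesovNorm hq0 (complexify_apply f),
    besovNorm_eq_schwartzBesovNorm hq0 (complexify_apply (g k))]
  gcongr
  exact Finset.single_le_sum (fun _ _ => zero_le) (Finset.mem_univ k)

end Complexify

/-- The `j`-th component of a Schwartz vector field. -/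
def component (u : 𝓢(Rn n, Rn n)) (j : Fin n) : 𝓢(Rn n, ℝ) :=
  postcompCLM (EuclideanSpace.proj j : Rn n →L[ℝ] ℝ) u

theorem besov_div_tensor_estimate_general
    (n : ℕ) (ψ₀ Ψ : SchwartzMap (Rn n) ℝ) (hψ : IsLPF n ψ₀) (hΨ : IsLowPiece ψ₀ Ψ)
    (s : ℝ) (hs : 0 < s) (q : ℝ≥0∞) (hq : 1 ≤ q) (p pb : ℝ≥0∞) (hpb : 1 ≤ pb)
    (hpbp : pb ≤ p) (hp2pb : p ≤ 2 * pb)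
    (hsn : (n : ℝ) * (2 * p⁻¹.toReal - pb⁻¹.toReal) < s) :
    ∃ C : ℝ, 0 < C ∧ ∀ u v : SchwartzMap (Rn n) (Rn n),
      (∑ j : Fin n, besovNorm ψ₀ Ψ (s - 1) pb q
          (fun x => ∑ k : Fin n, pderiv' k (fun y => u y j * v y k) x))
        ≤ ENNReal.ofReal C *
          ((∑ j : Fin n, besovNorm ψ₀ Ψ s p q (fun x => u x j)) *
           (∑ j : Fin n, besovNorm ψ₀ Ψ s p q (fun x => v x j))) := by
  obtain ⟨C, hC, h_bound⟩ := exists_besovNorm_sum_pderiv_mul_le hψ hΨ hs hq hpb hpbp hp2pb hsn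
  refine ⟨C.toReal + 1, by positivity, fun u v => ?_⟩
  have h_const : C ≤ ENNReal.ofReal (C.toReal + 1) :=
    (ENNReal.le_ofReal_iff_toReal_le hC (by positivity)).2 (le_add_of_nonneg_right zero_le_one)
  rw [Finset.sum_mul, Finset.mul_sum]
  gcongr with j
  exact (h_bound (component u j) (component v)).trans (mul_le_mul_left h_const _)

/-- Bilinear estimate for `div(u ⊗ v)`: for `s > 1`, `q ∈ [1,∞]`,
`p, p̄ ∈ (1,∞)` with `p̄ < p ≤ 2p̄` and `s > n(2/p − 1/p̄)`,
`‖div(u ⊗ v)‖_{B^{s−1}_{p̄,q}} ≤ C ‖u‖_{B^s_{p,q}} ‖v‖_{B^s_{p,q}}`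
(Besov norms of vector fields being sums of componentwise norms). -/
theorem besov_div_tensor_estimate
    (n : ℕ) (hn : 1 ≤ n) (ψ₀ Ψ : SchwartzMap (Rn n) ℝ)
    (hψ : IsLPF n ψ₀) (hΨ : IsLowPiece ψ₀ Ψ)
    (s : ℝ) (hs : 1 < s) (q : ℝ≥0∞) (hq : 1 ≤ q)
    (p pb : ℝ≥0∞) (hp : 1 < p) (hp' : p < ∞) (hpb : 1 < pb) (hpb' : pb < ∞)
    (hpbp : pb < p) (hp2pb : p ≤ 2 * pb)
    (hsn : (n:ℝ) * (2 / p.toReal - 1 / pb.toReal) < s) :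
    ∃ C : ℝ, 0 < C ∧ ∀ u v : SchwartzMap (Rn n) (Rn n),
      (∑ j : Fin n, besovNorm ψ₀ Ψ (s - 1) pb q
          (fun x => ∑ k : Fin n, pderiv' k (fun y => u y j * v y k) x))
        ≤ ENNReal.ofReal C *
          ((∑ j : Fin n, besovNorm ψ₀ Ψ s p q (fun x => u x j)) *
           (∑ j : Fin n, besovNorm ψ₀ Ψ s p q (fun x => v x j))) := by
  refine besov_div_tensor_estimate_general n ψ₀ Ψ hψ hΨ s (one_pos.trans hs) q hq p pb hpb.le
    hpbp.le hp2pb ?_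
  simpa only [ENNReal.toReal_inv, div_eq_mul_inv, one_mul] using hsn
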